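/- arXiv:1202.4406 — 4 statements merged into one kernel-verified Lean document; each statement's English description precedes it below -/
import Mathlib

section
/- Let ℓ be a proper interval representation of a finite simple graph G, i.e., ℓ assigns to each vertex a nonempty interval of integers, the intervals are pairwise incomparable under inclusion, and distinct vertices u, v are adjacent iff ℓ(u) ∩ ℓ(v) ≠ ∅. Define a linear order on V(G) by u < v iff min ℓ(u) < min ℓ(v), or min ℓ(u) = min ℓ(v) and max ℓ(u) < max ℓ(v). Then under this order every closed neighborhood N[w] is an interval, and the resulting interval system (N[w])_{w ∈ V(G)} is tight. -/
/-!
Incomparability forces left and right endpoints to be sorted in the same way, so the geometric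
order is comparison of left endpoints. Moreover `x ∈ N[w]` iff `a x ≤ b w` and `a w ≤ b x`, and
both inequalities pass to every vertex between two members of `N[w]`.

For tightness, let `u ∈ N[w]`. If `a u ≤ a w`, the minimum `m` of `N[w]` satisfies
`a m ≤ a u ≤ b u` and `a u ≤ a w ≤ b m`, so `m ∈ N[u]`. Symmetrically, if `a w ≤ a u`, the
maximum of `N[w]` lies in `N[u]`. These extrema exist even in an infinite graph: by
incomparability every interval meeting `[a w, b w]` has an endpoint in it, and distinct intervals
have distinct left and distinct right endpoints, so `N[w]` is finite.
-/

open Set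

/-- The closed neighborhood of a vertex: the vertex together with its neighbors. -/
def ClosedNbhd {V : Type*} (G : SimpleGraph V) (v : V) : Set V :=
  {u | u = v ∨ G.Adj u v}

/-- `S` is an interval (order-convex set) with respect to the order relation `r`. -/
def IsIntervalWrt {α : Type*} (r : α → α → Prop) (S : Set α) : Prop :=
  ∀ x y z, r x y → r y z → x ∈ S → z ∈ S → y ∈ S

/-- A family of hyperedges forms an interval hypergraph: some linear order on the
vertices makes every hyperedge an interval (a set of consecutive elements). -/
def IsIntervalHypergraph {α ι : Type*} (H : ι → Set α) : Prop :=
  ∃ r : α → α → Prop, IsLinearOrder α r ∧ ∀ i, IsIntervalWrt r (H i)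

/-- `S ⊆ ZMod n` is an arc: a set of (at most `n`) circularly consecutive points. -/
def IsArc (n : ℕ) (S : Set (ZMod n)) : Prop :=
  ∃ a : ZMod n, ∃ k : ℕ, k ≤ n ∧ S = {x | ∃ i : ℕ, i < k ∧ x = a + (i : ZMod n)}

/-- Arcs `A` and `B` share their start point: some point is a start point of both. -/
def SharesStart (n : ℕ) (A B : Set (ZMod n)) : Prop :=
  ∃ a, a ∈ A ∧ a - 1 ∉ A ∧ a ∈ B ∧ a - 1 ∉ B

/-- Arcs `A` and `B` share their end point: some point is an end point of both. -/
def SharesEnd (n : ℕ) (A B : Set (ZMod n)) : Prop :=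
  ∃ a, a ∈ A ∧ a + 1 ∉ A ∧ a ∈ B ∧ a + 1 ∉ B

/-- `G` is a proper interval graph: it has an intersection model consisting of
nonempty integer intervals that are pairwise incomparable under inclusion. -/
def IsProperIntervalGraph {V : Type*} (G : SimpleGraph V) : Prop :=
  ∃ l : V → Set ℤ,
    (∀ v, ∃ a b : ℤ, a ≤ b ∧ l v = Set.Icc a b) ∧
    (∀ u v, u ≠ v → ¬ l u ⊆ l v) ∧
    (∀ u v, u ≠ v → (G.Adj u v ↔ (l u ∩ l v).Nonempty))

/-- `G` is a circular-arc graph: it has an intersection model consisting of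
nonempty arcs of some circle `ZMod n`. -/
def IsCAGraph {V : Type*} (G : SimpleGraph V) : Prop :=
  ∃ n : ℕ, 0 < n ∧ ∃ l : V → Set (ZMod n),
    Function.Injective l ∧
    (∀ v, (l v).Nonempty ∧ IsArc n (l v)) ∧
    (∀ u v, u ≠ v → (G.Adj u v ↔ (l u ∩ l v).Nonempty))

/-- `G` is a proper circular-arc graph: it has an intersection model consisting of
nonempty arcs of some circle `ZMod n`, pairwise incomparable under inclusion. -/
def IsPCAGraph {V : Type*} (G : SimpleGraph V) : Prop :=
  ∃ n : ℕ, 0 < n ∧ ∃ l : V → Set (ZMod n),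
    Function.Injective l ∧
    (∀ v, (l v).Nonempty ∧ IsArc n (l v)) ∧
    (∀ u v, u ≠ v → ¬ l u ⊆ l v) ∧
    (∀ u v, u ≠ v → (G.Adj u v ↔ (l u ∩ l v).Nonempty))

/-- `G` is bipartite: the vertex set splits into two independent sets. -/
def IsBipartite {V : Type*} (G : SimpleGraph V) : Prop :=
  ∃ U : Set V, (∀ u ∈ U, ∀ v ∈ U, ¬ G.Adj u v) ∧ (∀ u ∉ U, ∀ v ∉ U, ¬ G.Adj u v)

section ProperInterval

variable {V α : Type*} {G : SimpleGraph V} {a b : V → α} {u v w x : V}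

/-- The geometric order of the family of intervals `[a v, b v]`, in its reflexive form: compare
left endpoints, then right endpoints. -/
def GeometricLE [Preorder α] (a b : V → α) (u v : V) : Prop :=
  a u < a v ∨ (a u = a v ∧ b u ≤ b v)

/-- Tightness of a set family with respect to an order `r`: whenever a nonempty member is
contained in another one, the two share their minimum or their maximum. As `H i ⊆ H j`, it
suffices that the minimum or the maximum of `H j` lies in `H i`. -/
def IsTightWrt {ι : Type*} (r : V → V → Prop) (H : ι → Set V) : Prop :=
  ∀ i j, (H i).Nonempty → H i ⊆ H j →
    (∃ m ∈ H i, ∀ x ∈ H j, r m x) ∨ (∃ m ∈ H i, ∀ x ∈ H j, r x m)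

/-- The intervals `[a v, b v]` are pairwise incomparable under inclusion, which is what makes
an interval representation proper. -/
def IncomparableIcc [Preorder α] (a b : V → α) : Prop :=
  Pairwise fun u v => ¬ Icc (a u) (b u) ⊆ Icc (a v) (b v)

/-- An interval representation of `G`, given by the left endpoints `a` and the right endpoints
`b` of nonempty closed intervals. -/
structure IsIntervalRep [Preorder α] (G : SimpleGraph V) (a b : V → α) : Prop where
  left_le_right : ∀ v, a v ≤ b v
  adj_iff : ∀ u v, u ≠ v → (G.Adj u v ↔ (Icc (a u) (b u) ∩ Icc (a v) (b v)).Nonempty)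

/-- A proper interval representation of `G`, with endpoints in an arbitrary preorder. -/
structure IsProperIntervalRep [Preorder α] (G : SimpleGraph V) (a b : V → α) : Prop
    extends IsIntervalRep G a b where
  incomparable : IncomparableIcc a b

lemma mem_closedNbhd_self (G : SimpleGraph V) (v : V) : v ∈ ClosedNbhd G v :=
  Or.inl rfl

namespace IncomparableIcc

variable [LinearOrder α]

lemma left_le_left_iff (h : IncomparableIcc a b) : a u ≤ a v ↔ b u ≤ b v := by
  obtain rfl | huv := eq_or_ne u v
  · simp
  · exact ⟨fun hl => le_of_not_ge fun hr => h huv.symm (Icc_subset_Icc hl hr),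
      fun hr => le_of_not_ge fun hl => h huv (Icc_subset_Icc hl hr)⟩

lemma left_injective (h : IncomparableIcc a b) : Function.Injective a := fun _ _ huv =>
  by_contra fun hne => h hne (Icc_subset_Icc huv.ge (h.left_le_left_iff.1 huv.le))

lemma right_injective (h : IncomparableIcc a b) : Function.Injective b := fun _ _ huv =>
  by_contra fun hne => h hne (Icc_subset_Icc (h.left_le_left_iff.2 huv.ge) huv.le)

lemma geometricLE_iff (h : IncomparableIcc a b) : GeometricLE a b u v ↔ a u ≤ a v := by
  rw [GeometricLE, and_iff_left_of_imp fun hl => h.left_le_left_iff.1 hl.le, ← le_iff_lt_or_eq]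

lemma isLinearOrder_geometricLE (h : IncomparableIcc a b) :
    IsLinearOrder V (GeometricLE a b) :=
  RelEmbedding.isLinearOrder (s := (· ≤ ·)) ⟨⟨a, h.left_injective⟩, h.geometricLE_iff.symm⟩

end IncomparableIcc

namespace IsIntervalRep

variable [Lattice α]

lemma mem_closedNbhd_iff (h : IsIntervalRep G a b) :
    x ∈ ClosedNbhd G w ↔ a x ≤ b w ∧ a w ≤ b x := by
  obtain rfl | hne := eq_or_ne x w
  · simp [mem_closedNbhd_self, h.left_le_right]
  · have hadj : x ∈ ClosedNbhd G w ↔ G.Adj x w := or_iff_right hne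
    simp [hadj, h.adj_iff x w hne, Icc_inter_Icc, h.left_le_right, and_comm]

lemma mem_closedNbhd_of_left_le (h : IsIntervalRep G a b) (hx : x ∈ ClosedNbhd G w)
    (hxu : a x ≤ a u) (huw : a u ≤ a w) : x ∈ ClosedNbhd G u :=
  h.mem_closedNbhd_iff.2
    ⟨hxu.trans (h.left_le_right u), huw.trans (h.mem_closedNbhd_iff.1 hx).2⟩

lemma mem_closedNbhd_of_right_le (h : IsIntervalRep G a b) (hx : x ∈ ClosedNbhd G w)
    (hwu : b w ≤ b u) (hux : b u ≤ b x) : x ∈ ClosedNbhd G u :=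
  h.mem_closedNbhd_iff.2
    ⟨(h.mem_closedNbhd_iff.1 hx).1.trans hwu, (h.left_le_right u).trans hux⟩

end IsIntervalRep

namespace IsProperIntervalRep

variable [LinearOrder α]

lemma isIntervalWrt_closedNbhd (h : IsProperIntervalRep G a b) (w : V) :
    IsIntervalWrt (GeometricLE a b) (ClosedNbhd G w) := by
  intro x y z hxy hyz hx hz
  rw [h.incomparable.geometricLE_iff] at hxy hyz
  rw [h.mem_closedNbhd_iff] at hx hz ⊢
  exact ⟨hyz.trans hz.1, hx.2.trans (h.incomparable.left_le_left_iff.1 hxy)⟩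

lemma finite_closedNbhd [LocallyFiniteOrder α] (h : IsProperIntervalRep G a b) (w : V) :
    (ClosedNbhd G w).Finite := by
  have hleft : (a ⁻¹' Icc (a w) (b w)).Finite :=
    (finite_Icc _ _).preimage h.incomparable.left_injective.injOn
  have hright : (b ⁻¹' Icc (a w) (b w)).Finite :=
    (finite_Icc _ _).preimage h.incomparable.right_injective.injOn
  refine (hleft.union hright).subset fun x hx => ?_
  obtain ⟨hxw, hwx⟩ := h.mem_closedNbhd_iff.1 hx
  exact (le_total (a w) (a x)).imp (fun hle => ⟨hle, hxw⟩)
    fun hle => ⟨hwx, h.incomparable.left_le_left_iff.1 hle⟩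

lemma exists_min_or_max_mem_closedNbhd (h : IsProperIntervalRep G a b)
    (hfin : (ClosedNbhd G w).Finite) (hu : u ∈ ClosedNbhd G w) :
    (∃ m ∈ ClosedNbhd G u, ∀ x ∈ ClosedNbhd G w, GeometricLE a b m x) ∨
      (∃ m ∈ ClosedNbhd G u, ∀ x ∈ ClosedNbhd G w, GeometricLE a b x m) := by
  simp only [h.incomparable.geometricLE_iff]
  refine (le_total (a u) (a w)).imp (fun huw => ?_) fun hwu => ?_
  · obtain ⟨m, hm, hmin⟩ := exists_min_image _ a hfin ⟨u, hu⟩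
    exact ⟨m, h.mem_closedNbhd_of_left_le hm (hmin u hu) huw, hmin⟩
  · obtain ⟨m, hm, hmax⟩ := exists_max_image _ a hfin ⟨u, hu⟩
    have hr {y z : V} : a y ≤ a z → b y ≤ b z := h.incomparable.left_le_left_iff.1
    exact ⟨m, h.mem_closedNbhd_of_right_le hm (hr hwu) (hr (hmax u hu)), hmax⟩

lemma isTightWrt_closedNbhd [LocallyFiniteOrder α] (h : IsProperIntervalRep G a b) :
    IsTightWrt (GeometricLE a b) (ClosedNbhd G) := fun u w _ huw =>
  h.exists_min_or_max_mem_closedNbhd (h.finite_closedNbhd w) (huw (mem_closedNbhd_self G u))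

end IsProperIntervalRep

end ProperInterval

theorem stmt9_general {V α : Type*} [LinearOrder α] [LocallyFiniteOrder α] {G : SimpleGraph V}
    {a b : V → α} (h : IsProperIntervalRep G a b) :
    IsLinearOrder V (GeometricLE a b) ∧
      (∀ w, IsIntervalWrt (GeometricLE a b) (ClosedNbhd G w)) ∧
      IsTightWrt (GeometricLE a b) (ClosedNbhd G) :=
  ⟨h.incomparable.isLinearOrder_geometricLE, h.isIntervalWrt_closedNbhd,
    h.isTightWrt_closedNbhd⟩

/-- The geometric order induced on `V(G)` by a proper interval
representation of `G` (intervals `[a v, b v]`) is a linear order making every closed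
neighborhood an interval, and the resulting interval system is tight. -/
theorem stmt9 {V : Type*} [Fintype V] (G : SimpleGraph V) (a b : V → ℤ)
    (hab : ∀ v, a v ≤ b v)
    (hinc : ∀ u v, u ≠ v → ¬ Set.Icc (a u) (b u) ⊆ Set.Icc (a v) (b v))
    (hadj : ∀ u v, u ≠ v →
      (G.Adj u v ↔ (Set.Icc (a u) (b u) ∩ Set.Icc (a v) (b v)).Nonempty)) :
    IsLinearOrder V (fun u v => a u < a v ∨ (a u = a v ∧ b u ≤ b v)) ∧
    (∀ w, IsIntervalWrt (fun u v => a u < a v ∨ (a u = a v ∧ b u ≤ b v))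
      (ClosedNbhd G w)) ∧
    (∀ u w, ClosedNbhd G u ⊆ ClosedNbhd G w →
      ((∃ m, m ∈ ClosedNbhd G u ∧ ∀ x ∈ ClosedNbhd G w,
          (a m < a x ∨ (a m = a x ∧ b m ≤ b x))) ∨
       (∃ m, m ∈ ClosedNbhd G u ∧ ∀ x ∈ ClosedNbhd G w,
          (a x < a m ∨ (a x = a m ∧ b x ≤ b m))))) := by
  obtain ⟨hlin, hint, htight⟩ := stmt9_general (G := G) ⟨⟨hab, hadj⟩, fun u v => hinc u v⟩
  exact ⟨hlin, hint, fun u w => htight u w ⟨u, mem_closedNbhd_self G u⟩⟩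
end

section
/- Let G be a finite simple graph whose complement is not bipartite and whose closed neighborhood hypergraph N[G] is a circular-arc hypergraph. Then G has no universal vertex, i.e., no vertex v with N[v] = V(G). -/
open Set

/-!
Let `u` be a universal vertex, placed at the point `p` of the circle. Every closed neighborhood
`N[v]` contains both `u` and `v`, so it covers one of the two arcs between `p` and `v`. Any two
vertices `v`, `w` whose neighborhoods cover the arcs running from `p` to them in the positive
direction are adjacent, because one of `v`, `w` lies on the arc from `p` to the other. The same
holds for the negative direction, so `V` is a union of two cliques of `G`, that is, the complement
of `G` is bipartite.
-/

section CircularOrder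

variable {α : Type*}

/-- Convexity in a circular order, the order-theoretic counterpart of being an arc: any two points
of `S` are joined inside `S` by one of the two circular intervals between them. The intervals are
open because `cIcc x x` is the whole circle whereas `cIoo x x` is empty. -/
def IsCircularlyConvex [CircularPreorder α] (S : Set α) : Prop :=
  ∀ ⦃x⦄, x ∈ S → ∀ ⦃y⦄, y ∈ S → cIoo x y ⊆ S ∨ cIoo y x ⊆ S

lemma sbtw_or_sbtw_of_ne [CircularOrder α] {x y z : α} (hxy : x ≠ y) (hyz : y ≠ z)
    (hzx : z ≠ x) : sbtw x y z ∨ sbtw x z y := by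
  by_contra! h
  have hzyx : btw z y x := btw_iff_not_sbtw.2 h.1
  have hxyz : btw x y z := (btw_iff_not_sbtw.2 h.2).cyclic_right
  rcases hxyz.antisymm hzyx with h | h | h <;> contradiction

lemma mem_or_mem_of_cIoo_subset [CircularOrder α] {S T : Set α} {p x y : α}
    (hpS : p ∈ S) (hxS : x ∈ S) (hpT : p ∈ T) (hS : cIoo p x ⊆ S) (hT : cIoo p y ⊆ T) :
    y ∈ S ∨ x ∈ T := by
  by_cases hpx : p = x
  · exact .inr (hpx ▸ hpT)
  by_cases hxy : x = y
  · exact .inl (hxy ▸ hxS)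
  by_cases hyp : y = p
  · exact .inl (hyp ▸ hpS)
  exact (sbtw_or_sbtw_of_ne hpx hxy hyp).symm.imp (@hS y) (@hT x)

end CircularOrder

section ZMod

variable {n : ℕ}

lemma zmod_sbtw_iff_val_lt [NeZero n] {x y z : ZMod n} :
    sbtw x y z ↔ x.val < y.val ∧ y.val < z.val ∨ y.val < z.val ∧ z.val < x.val ∨
      z.val < x.val ∧ x.val < y.val := by
  cases n with
  | zero => exact absurd rfl (NeZero.ne 0)
  | succ n => exact Iff.rfl

lemma zmod_sbtw_add_left [NeZero n] (a : ZMod n) {x y z : ZMod n} :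
    sbtw (a + x) (a + y) (a + z) ↔ sbtw x y z := by
  have val_add_cases (t : ZMod n) :
      (a + t).val = a.val + t.val ∨ (a + t).val + n = a.val + t.val := by
    rcases lt_or_ge (a.val + t.val) n with h | h
    · exact .inl (ZMod.val_add_of_lt h)
    · exact .inr (ZMod.val_add_val_of_le h).symm
  have hx := val_add_cases x
  have hy := val_add_cases y
  have hz := val_add_cases z
  have := ZMod.val_lt x
  have := ZMod.val_lt y
  have := ZMod.val_lt z
  have := ZMod.val_lt (a + x)
  have := ZMod.val_lt (a + y)
  have := ZMod.val_lt (a + z)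
  rw [zmod_sbtw_iff_val_lt, zmod_sbtw_iff_val_lt]
  omega

lemma IsArc.isCircularlyConvex {S : Set (ZMod n)} (hS : IsArc n S) : IsCircularlyConvex S := by
  obtain ⟨a, k, hk, rfl⟩ := hS
  rintro _ ⟨i, hi, rfl⟩ _ ⟨j, hj, rfl⟩
  have : NeZero n := ⟨by omega⟩
  wlog hij : i ≤ j generalizing i j
  · exact (this j hj i hi (le_of_not_ge hij)).symm
  refine .inl fun z hz => ⟨(z - a).val, ?_, by simp⟩
  have hbetween : sbtw (i : ZMod n) (z - a) j :=
    (zmod_sbtw_add_left a).1 (by simpa only [add_sub_cancel, mem_cIoo] using hz)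
  rw [zmod_sbtw_iff_val_lt, ZMod.val_natCast_of_lt (hi.trans_le hk),
    ZMod.val_natCast_of_lt (hj.trans_le hk)] at hbetween
  omega

end ZMod

section Graph

variable {V α : Type*} {G : SimpleGraph V}

lemma mem_closedNbhd_comm {u v : V} : u ∈ ClosedNbhd G v ↔ v ∈ ClosedNbhd G u :=
  or_congr eq_comm (G.adj_comm u v)

lemma isBipartite_compl_of_isClique {U : Set V} (hU : G.IsClique U) (hUc : G.IsClique Uᶜ) :
    IsBipartite Gᶜ :=
  ⟨U, fun _ hu _ hv huv => huv.2 (hU hu hv huv.1), fun _ hu _ hv huv => huv.2 (hUc hu hv huv.1)⟩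

lemma isClique_setOf_cIoo_subset [CircularOrder α] {f : V → α} {S : V → Set α} {p : α}
    (hS : ∀ v, f ⁻¹' S v = ClosedNbhd G v) (hp : ∀ v, p ∈ S v) :
    G.IsClique {v | cIoo p (f v) ⊆ S v} := by
  intro v hv w hw hvw
  have mem_iff (x y : V) : f x ∈ S y ↔ x = y ∨ G.Adj x y := Set.ext_iff.1 (hS y) x
  rcases mem_or_mem_of_cIoo_subset (hp v) ((mem_iff v v).2 (.inl rfl)) (hp w) hv hw with h | h
  · exact (((mem_iff w v).1 h).resolve_left hvw.symm).symm
  · exact ((mem_iff v w).1 h).resolve_left hvw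

theorem stmt10_general [CircularOrder α] (G : SimpleGraph V) (hnb : ¬ IsBipartite Gᶜ)
    (hca : ∃ (f : V → α) (S : V → Set α),
      ∀ v, IsCircularlyConvex (S v) ∧ f ⁻¹' S v = ClosedNbhd G v) :
    ¬ ∃ v : V, ClosedNbhd G v = Set.univ := by
  rintro ⟨u, hu⟩
  obtain ⟨f, S, hfS⟩ := hca
  have hS (v : V) : f ⁻¹' S v = ClosedNbhd G v := (hfS v).2
  have mem_of_mem {x v : V} (h : x ∈ ClosedNbhd G v) : f x ∈ S v := (hS v).superset h
  have hp (v : V) : f u ∈ S v := mem_of_mem (mem_closedNbhd_comm.2 (hu ▸ mem_univ v))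
  refine hnb (isBipartite_compl_of_isClique (isClique_setOf_cIoo_subset hS hp) ?_)
  -- Reversing the circular order exchanges `cIoo (f u) (f v)` and `cIoo (f v) (f u)`.
  have hrev : G.IsClique {v | cIoo (f v) (f u) ⊆ S v} :=
    isClique_setOf_cIoo_subset (α := αᵒᵈ) hS hp
  exact hrev.subset fun v hv => ((hfS v).1 (hp v) (mem_of_mem (.inl rfl))).resolve_left hv

end Graph

/-- A graph with non-bipartite complement whose closed neighborhood
hypergraph is a circular-arc hypergraph has no universal vertex. -/
theorem stmt10 {V : Type*} [Fintype V] (G : SimpleGraph V)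
    (hnb : ¬ IsBipartite Gᶜ)
    (hca : ∃ f : V ≃ ZMod (Fintype.card V),
      ∀ v, IsArc (Fintype.card V) (f '' ClosedNbhd G v)) :
    ¬ ∃ v : V, ClosedNbhd G v = Set.univ := by
  obtain ⟨f, hf⟩ := hca
  exact stmt10_general G hnb
    ⟨f, _, fun v => ⟨(hf v).isCircularlyConvex, f.injective.preimage_image _⟩⟩
end

section
/- Let G be a finite simple graph admitting a tight interval representation: an injective map ℓ assigning to each vertex a nonempty interval of integers such that the family of intervals is tight (whenever ℓ(u) ⊇ ℓ(w), the two intervals share their minimum or their maximum) and distinct vertices u, v are adjacent iff ℓ(u) ∩ ℓ(v) ≠ ∅. Then G is a proper interval graph. -/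
/-!
Tightness says that `a u < a v` forces `b u ≤ b v`, so the vertices have a linear order along which
both endpoints are weakly increasing. Breaking ties between coinciding endpoints by this order, with
all left endpoints at a point placed before all right endpoints at that point, makes both endpoints
strictly increasing, so that no interval contains another, and preserves every comparison of a left
with a right endpoint, hence the intersection graph. The finitely many new endpoints lie in a
lexicographic product and are finally embedded in the integers.
-/

open Set

theorem Icc_inter_Icc_nonempty_iff {α : Type*} [Lattice α] {p q r s : α}
    (hpq : p ≤ q) (hrs : r ≤ s) : (Icc p q ∩ Icc r s).Nonempty ↔ p ≤ s ∧ r ≤ q := by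
  simp only [Icc_inter_Icc, nonempty_Icc, sup_le_iff, le_inf_iff, hpq, hrs, true_and, and_comm]

theorem not_Icc_subset_Icc_of_strictMono {ι α : Type*} [LinearOrder ι] [Preorder α]
    {l r : ι → α} (hl : StrictMono l) (hr : StrictMono r) {i j : ι} (hi : l i ≤ r i)
    (hij : i ≠ j) : ¬ Icc (l i) (r i) ⊆ Icc (l j) (r j) := by
  rw [Icc_subset_Icc_iff hi]
  rintro ⟨hleft, hright⟩
  rcases hij.lt_or_gt with hlt | hgt
  · exact (hl hlt).not_ge hleft
  · exact (hr hgt).not_ge hright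

theorem monovary_of_tight_Icc {ι α : Type*} [LinearOrder α] {a b : ι → α}
    (htight : ∀ i j, Icc (a i) (b i) ⊆ Icc (a j) (b j) → a i = a j ∨ b i = b j) :
    Monovary b a := by
  intro i j ha
  by_contra! hb
  rcases htight j i (Icc_subset_Icc ha.le hb.le) with h | h
  · exact ha.ne' h
  · exact hb.ne h

theorem exists_strictMonoOn_of_finite {α β : Type*} [LinearOrder α] [LinearOrder β] [Infinite β]
    {s : Set α} (hs : s.Finite) : ∃ f : α → β, StrictMonoOn f s := by
  have := hs.to_subtype
  obtain ⟨e⟩ := nonempty_orderEmbedding_of_finite_infinite s β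
  have hval := Subtype.val_injective (p := (· ∈ s))
  refine ⟨Function.extend Subtype.val e fun _ ↦ Classical.arbitrary β, fun x hx y hy hxy ↦ ?_⟩
  rw [hval.extend_apply e _ ⟨x, hx⟩, hval.extend_apply e _ ⟨y, hy⟩]
  exact e.strictMono hxy

theorem isProperIntervalGraph_of_strictMono {V α : Type*} [Finite V] [LinearOrder V]
    [LinearOrder α] (G : SimpleGraph V) {l r : V → α} (hl : StrictMono l) (hr : StrictMono r)
    (hlr : ∀ v, l v ≤ r v)
    (hadj : ∀ u v, u ≠ v → (G.Adj u v ↔ (Icc (l u) (r u) ∩ Icc (l v) (r v)).Nonempty)) :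
    IsProperIntervalGraph G := by
  obtain ⟨f, hf⟩ : ∃ f : α → ℤ, StrictMonoOn f (range l ∪ range r) :=
    exists_strictMonoOn_of_finite ((finite_range l).union (finite_range r))
  have hleft (v : V) : l v ∈ range l ∪ range r := .inl (mem_range_self v)
  have hright (v : V) : r v ∈ range l ∪ range r := .inr (mem_range_self v)
  have hle_iff (u v : V) : f (l u) ≤ f (r v) ↔ l u ≤ r v := hf.le_iff_le (hleft u) (hright v)
  have hflr (v : V) : f (l v) ≤ f (r v) := (hle_iff v v).2 (hlr v)
  have hfl : StrictMono (f ∘ l) := fun u v huv ↦ hf (hleft u) (hleft v) (hl huv)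
  have hfr : StrictMono (f ∘ r) := fun u v huv ↦ hf (hright u) (hright v) (hr huv)
  refine ⟨fun v ↦ Icc (f (l v)) (f (r v)), fun v ↦ ⟨_, _, hflr v, rfl⟩,
    fun u v ↦ not_Icc_subset_Icc_of_strictMono hfl hfr (hflr u), fun u v huv ↦ ?_⟩
  rw [hadj u v huv, Icc_inter_Icc_nonempty_iff (hlr u) (hlr v),
    Icc_inter_Icc_nonempty_iff (hflr u) (hflr v), hle_iff, hle_iff]

theorem strictMono_toLex_prodMk {ι α β : Type*} [Preorder ι] [PartialOrder α] [Preorder β]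
    {f : ι → α} {g : ι → β} (hf : Monotone f) (hg : StrictMono g) :
    StrictMono fun i ↦ toLex (f i, g i) :=
  fun _ _ hij ↦ Prod.Lex.toLex_strictMono (Prod.mk_lt_mk_of_le_of_lt (hf hij.le) (hg hij))

theorem toLex_inlₗ_le_toLex_inrₗ_iff {α β γ : Type*} [PartialOrder α] [Preorder β] [Preorder γ]
    {x y : α} {i : β} {j : γ} :
    toLex (x, Sum.inlₗ i) ≤ toLex (y, Sum.inrₗ j) ↔ x ≤ y :=
  Prod.Lex.toLex_le_toLex'.trans (and_iff_left fun _ ↦ Sum.Lex.inl_le_inr i j)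

theorem isProperIntervalGraph_of_monotone {V α : Type*} [Finite V] [LinearOrder V]
    [LinearOrder α] (G : SimpleGraph V) {a b : V → α} (ha : Monotone a) (hb : Monotone b)
    (hab : ∀ v, a v ≤ b v)
    (hadj : ∀ u v, u ≠ v → (G.Adj u v ↔ (Icc (a u) (b u) ∩ Icc (a v) (b v)).Nonempty)) :
    IsProperIntervalGraph G := by
  let l (v : V) : α ×ₗ (V ⊕ₗ V) := toLex (a v, Sum.inlₗ v)
  let r (v : V) : α ×ₗ (V ⊕ₗ V) := toLex (b v, Sum.inrₗ v)
  have hle_iff (u v : V) : l u ≤ r v ↔ a u ≤ b v := toLex_inlₗ_le_toLex_inrₗ_iff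
  have hlr (v : V) : l v ≤ r v := (hle_iff v v).2 (hab v)
  refine isProperIntervalGraph_of_strictMono G
    (strictMono_toLex_prodMk ha Sum.Lex.inl_strictMono : StrictMono l)
    (strictMono_toLex_prodMk hb Sum.Lex.inr_strictMono : StrictMono r) hlr fun u v huv ↦ ?_
  rw [hadj u v huv, Icc_inter_Icc_nonempty_iff (hab u) (hab v),
    Icc_inter_Icc_nonempty_iff (hlr u) (hlr v), hle_iff, hle_iff]

theorem stmt14_general {V α : Type*} [Finite V] [LinearOrder α] (G : SimpleGraph V) (a b : V → α)
    (hab : ∀ v, a v ≤ b v)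
    (htight : ∀ u v, Icc (a u) (b u) ⊆ Icc (a v) (b v) → a u = a v ∨ b u = b v)
    (hadj : ∀ u v, u ≠ v → (G.Adj u v ↔ (Icc (a u) (b u) ∩ Icc (a v) (b v)).Nonempty)) :
    IsProperIntervalGraph G := by
  obtain ⟨_, hb, ha⟩ := monovary_iff_exists_monotone.1 (monovary_of_tight_Icc htight)
  exact isProperIntervalGraph_of_monotone G ha hb hab hadj

/-- A graph admitting a tight interval representation (an injective
assignment of nonempty integer intervals, tight under inclusion, realizing adjacency
by intersection) is a proper interval graph. -/
theorem stmt14 {V : Type*} [Fintype V] (G : SimpleGraph V) (a b : V → ℤ)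
    (hab : ∀ v, a v ≤ b v)
    (hinj : Function.Injective (fun v => Set.Icc (a v) (b v)))
    (htight : ∀ u v, Set.Icc (a u) (b u) ⊆ Set.Icc (a v) (b v) →
      a u = a v ∨ b u = b v)
    (hadj : ∀ u v, u ≠ v →
      (G.Adj u v ↔ (Set.Icc (a u) (b u) ∩ Set.Icc (a v) (b v)).Nonempty)) :
    IsProperIntervalGraph G :=
  stmt14_general G a b hab htight hadj
end

section
/- Every co-convex graph is a circular-arc graph: if the complement of a finite simple graph G is a convex bipartite graph, then G is a circular-arc graph. -/
/-!
The two sides `U` and `W` of the complement are cliques of `G`. Number the vertices of `U` by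
`0, …, N - 1` in the given order and, on a circle with the points `0, …, 2 * N`, assign to the
`i`-th one the arc `[i, i + N]`. These arcs all contain `N`, so the arcs of a nonempty set `S` of
vertices cover a single arc `[min S, max S + N]`, which misses the point `2 * N`. If `S` is an
interval, the arc of a vertex outside `S` has an end point that is not covered. Hence a vertex of
`W` can be assigned the complement of the arcs of its non-neighbors in `U`; all these complements
contain `2 * N`.

Several vertices of `W` may receive the same arc. To separate them, refine the circle by a factor
`K` larger than the number of vertices, and lengthen the arcs on the right by different amounts
smaller than `K`: the intersections stay the same, and the lengths become distinct modulo `K`.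
-/

open Set

section Arcs

variable {n k : ℕ}

/-- The arc of `k` consecutive points of `ZMod n` that starts at `a`, in the form used by `IsArc`.
It has `k` distinct points only for `k ≤ n`. -/
def arc (a : ZMod n) (k : ℕ) : Set (ZMod n) :=
  {x | ∃ i : ℕ, i < k ∧ x = a + i}

theorem isArc_arc (a : ZMod n) (hk : k ≤ n) : IsArc n (arc a k) :=
  ⟨a, k, hk, rfl⟩

theorem arc_eq_image (a : ZMod n) (k : ℕ) : arc a k = (fun i : ℕ ↦ a + i) '' Iio k := by
  ext x
  simp only [arc, mem_ofPred_eq, mem_image, mem_Iio, eq_comm]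

theorem injOn_add_natCast (a : ZMod n) : InjOn (fun i : ℕ ↦ a + (i : ZMod n)) (Iio n) :=
  fun _ hi _ hj hij ↦ CharP.natCast_injOn_Iio (ZMod n) n hi hj (add_left_cancel hij)

theorem ncard_arc (a : ZMod n) (hk : k ≤ n) : (arc a k).ncard = k := by
  rw [arc_eq_image, ((injOn_add_natCast a).mono (Iio_subset_Iio hk)).ncard_image, ncard_Iio_nat]

theorem add_natCast_mem_arc_iff (a : ZMod n) {j : ℕ} (hk : k ≤ n) (hj : j < n) :
    a + j ∈ arc a k ↔ j < k := by
  rw [arc_eq_image, (injOn_add_natCast a).mem_image_iff (Iio_subset_Iio hk) hj, mem_Iio]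

theorem compl_arc [NeZero n] (a : ZMod n) (hk : k ≤ n) :
    (arc a k)ᶜ = arc (a + (k : ZMod n)) (n - k) := by
  ext x
  obtain ⟨j, hj, rfl⟩ : ∃ j < n, x = a + j :=
    ⟨(x - a).val, ZMod.val_lt _, by rw [ZMod.natCast_zmod_val, add_sub_cancel]⟩
  rw [mem_compl_iff, add_natCast_mem_arc_iff a hk hj, not_lt]
  constructor
  · intro hkj
    exact ⟨j - k, by omega, by rw [add_assoc, ← Nat.cast_add, Nat.add_sub_cancel' hkj]⟩
  · rintro ⟨i, hi, hji⟩
    rw [add_assoc, ← Nat.cast_add] at hji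
    have : j = k + i := injOn_add_natCast a hj (mem_Iio.2 (by omega)) hji
    omega

theorem IsArc.compl [NeZero n] {S : Set (ZMod n)} (hS : IsArc n S) : IsArc n Sᶜ := by
  obtain ⟨a, k, hk, rfl⟩ := hS
  exact compl_arc a hk ▸ isArc_arc _ (Nat.sub_le n k)

theorem isArc_empty (n : ℕ) : IsArc n ∅ :=
  ⟨0, 0, n.zero_le, by simp⟩

theorem isArc_val_preimage_Icc {p q : ℕ} (hq : q < n) :
    IsArc n ((ZMod.val : ZMod n → ℕ) ⁻¹' Icc p q) := by
  have : NeZero n := ⟨by omega⟩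
  refine ⟨p, q + 1 - p, by omega, ext fun x ↦ ⟨fun ⟨hpx, hxq⟩ ↦ ⟨x.val - p, by omega, ?_⟩, ?_⟩⟩
  · rw [← Nat.cast_add, Nat.add_sub_cancel' hpx, ZMod.natCast_zmod_val]
  · rintro ⟨i, hi, rfl⟩
    rw [← Nat.cast_add, mem_preimage, ZMod.val_cast_of_lt (by omega), mem_Icc]
    omega

end Arcs

section Refinement

variable {K n : ℕ}

/-- The inclusion of the circle `ZMod n` into its `K`-fold refinement `ZMod (K * n)`, as the
multiples of `K`. It carries common points of arcs to common points of their refinements. -/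
def dilate (K : ℕ) (x : ZMod n) : ZMod (K * n) :=
  (K * x.val : ℕ)

/-- The map from the `K`-fold refinement `ZMod (K * n)` back to `ZMod n` that rounds down to the
nearest multiple of `K`. It carries common points of refined arcs to common points of the arcs. -/
def coarsen (x : ZMod (K * n)) : ZMod n :=
  (x.val / K : ℕ)

theorem dilate_natCast (m : ℕ) : dilate K (m : ZMod n) = (K * m : ℕ) := by
  rw [dilate, ZMod.val_natCast, ← Nat.mul_mod_mul_left, ZMod.natCast_mod]

theorem coarsen_natCast (m : ℕ) : coarsen (m : ZMod (K * n)) = (m / K : ℕ) := by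
  rw [coarsen, ZMod.val_natCast, Nat.mod_mul_right_div_self, ZMod.natCast_mod]

theorem IsArc.exists_refinement {S : Set (ZMod n)} (hS : IsArc n S) (hne : S.Nonempty) {j : ℕ}
    (hj : 0 < j) (hjK : j < K) :
    ∃ T : Set (ZMod (K * n)), IsArc (K * n) T ∧ T.ncard % K = j ∧
      MapsTo (dilate K) S T ∧ MapsTo coarsen T S := by
  obtain ⟨a, k, hk, rfl⟩ := hS
  obtain ⟨-, i₀, hi₀, -⟩ := hne
  have : NeZero n := ⟨by omega⟩
  obtain ⟨a, rfl⟩ := ZMod.natCast_zmod_surjective a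
  have hlen : K * (k - 1) + j ≤ K * n := by
    calc K * (k - 1) + j ≤ K * (k - 1) + K := by omega
      _ = K * (k - 1 + 1) := (Nat.mul_succ K (k - 1)).symm
      _ ≤ K * n := Nat.mul_le_mul_left K (by omega)
  refine ⟨arc (K * a : ℕ) (K * (k - 1) + j), isArc_arc _ hlen, ?_, ?_, ?_⟩
  · rw [ncard_arc _ hlen, Nat.mul_add_mod, Nat.mod_eq_of_lt hjK]
  · rintro - ⟨i, hi, rfl⟩
    have hKi : K * i ≤ K * (k - 1) := Nat.mul_le_mul_left K (by omega)
    refine ⟨K * i, by omega, ?_⟩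
    rw [← Nat.cast_add, dilate_natCast, Nat.mul_add, Nat.cast_add]
  · rintro - ⟨i, hi, rfl⟩
    refine ⟨i / K, ?_, ?_⟩
    · calc i / K < k - 1 + 1 := (Nat.div_lt_iff_lt_mul (by omega)).2 (by rw [add_mul]; lia)
        _ = k := by omega
    · rw [← Nat.cast_add, coarsen_natCast, Nat.mul_add_div (by omega), Nat.cast_add]

end Refinement

section Models

variable {V : Type*} {G : SimpleGraph V} {n : ℕ}

/-- `l` is an intersection model of `G` by nonempty arcs of `ZMod n`. Unlike in `IsCAGraph`,
different vertices may be assigned the same arc. -/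
def IsArcModel (G : SimpleGraph V) (n : ℕ) (l : V → Set (ZMod n)) : Prop :=
  (∀ v, (l v).Nonempty ∧ IsArc n (l v)) ∧
    ∀ u v, u ≠ v → (G.Adj u v ↔ (l u ∩ l v).Nonempty)

theorem IsArcModel.isCAGraph [Finite V] (hn : 0 < n) {l : V → Set (ZMod n)}
    (hl : IsArcModel G n l) : IsCAGraph G := by
  obtain ⟨N, ⟨e⟩⟩ := Finite.exists_equiv_fin V
  choose T hT hcard hdilate hcoarsen using fun v ↦
    (hl.1 v).2.exists_refinement (hl.1 v).1 (e v).val.succ_pos (Nat.succ_lt_succ (e v).is_lt)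
  refine ⟨(N + 1) * n, Nat.mul_pos N.succ_pos hn, T, fun u v huv ↦ ?_,
    fun v ↦ ⟨(hl.1 v).1.image _ |>.mono (hdilate v).image_subset, hT v⟩, fun u v huv ↦ ?_⟩
  · have hsucc : (e u).val.succ = (e v).val.succ := by rw [← hcard u, ← hcard v, huv]
    exact e.injective (Fin.ext (Nat.succ_injective hsucc))
  · rw [hl.2 u v huv]
    exact ⟨fun ⟨x, hxu, hxv⟩ ↦ ⟨dilate (N + 1) x, hdilate u hxu, hdilate v hxv⟩,
      fun ⟨x, hxu, hxv⟩ ↦ ⟨coarsen x, hcoarsen u hxu, hcoarsen v hxv⟩⟩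

theorem exists_isArcModel_of_isClique {U : Set V} (hU : G.IsClique U) (hUc : G.IsClique Uᶜ)
    {A : U → Set (ZMod n)} {B : ↥Uᶜ → Set (ZMod n)} (hA : ∀ u, IsArc n (A u))
    (hB : ∀ w, IsArc n (B w)) {p q : ZMod n} (hp : ∀ u, p ∈ A u) (hq : ∀ w, q ∈ B w)
    (hAB : ∀ (u : U) (w : ↥Uᶜ), G.Adj u w ↔ (A u ∩ B w).Nonempty) :
    ∃ l, IsArcModel G n l := by
  classical
  refine ⟨fun v ↦ if hv : v ∈ U then A ⟨v, hv⟩ else B ⟨v, hv⟩, fun v ↦ ?_, fun u v huv ↦ ?_⟩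
  · by_cases hv : v ∈ U <;> simp only [hv, ↓reduceDIte]
    · exact ⟨⟨p, hp _⟩, hA _⟩
    · exact ⟨⟨q, hq _⟩, hB _⟩
  · by_cases hu : u ∈ U <;> by_cases hv : v ∈ U <;> simp only [hu, hv, ↓reduceDIte]
    · exact iff_of_true (hU hu hv huv) ⟨p, hp _, hp _⟩
    · exact hAB ⟨u, hu⟩ ⟨v, hv⟩
    · rw [G.adj_comm, inter_comm]
      exact hAB ⟨v, hv⟩ ⟨u, hu⟩
    · exact iff_of_true (hUc hu hv huv) ⟨q, hq _, hq _⟩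

end Models

section HalfArcs

/-- The points `i, …, i + N` on the circle with `2 * N + 1` points. For `i < N` they form an arc
that contains `N` and misses the last point `2 * N`: the arc of the `i`-th of `N` vertices of `U`
in the model of a co-convex graph. -/
def halfArc (N i : ℕ) : Set (ZMod (2 * N + 1)) :=
  ZMod.val ⁻¹' Icc i (i + N)

variable {α : Type*} {f : α → ℕ} {N : ℕ}

theorem natCast_mem_halfArc_iff {i m : ℕ} (hm : m ≤ 2 * N) :
    (m : ZMod (2 * N + 1)) ∈ halfArc N i ↔ i ≤ m ∧ m ≤ i + N := by
  rw [halfArc, mem_preimage, ZMod.val_cast_of_lt (Nat.lt_succ_of_le hm), mem_Icc]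

theorem isArc_halfArc {i : ℕ} (hi : i ≤ N) : IsArc (2 * N + 1) (halfArc N i) :=
  isArc_val_preimage_Icc (by omega)

theorem biUnion_Icc_add {S : Set α} {x z : α} (hx : x ∈ S) (hz : z ∈ S)
    (hmin : ∀ y ∈ S, f x ≤ f y) (hmax : ∀ y ∈ S, f y ≤ f z) (hxz : f z ≤ f x + N) :
    ⋃ y ∈ S, Icc (f y) (f y + N) = Icc (f x) (f z + N) := by
  refine Subset.antisymm (iUnion₂_subset fun y hy ↦ Icc_subset_Icc (hmin y hy) ?_) ?_
  · exact Nat.add_le_add_right (hmax y hy) N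
  · rintro m ⟨hxm, hmz⟩
    rcases le_total m (f x + N) with hm | hm
    · exact mem_iUnion₂.2 ⟨x, hx, hxm, hm⟩
    · exact mem_iUnion₂.2 ⟨z, hz, hxz.trans hm, hmz⟩

theorem isArc_biUnion_halfArc {S : Set α} (hS : S.Finite) (hf : ∀ x ∈ S, f x ≤ N) :
    IsArc (2 * N + 1) (⋃ x ∈ S, halfArc N (f x)) := by
  rcases S.eq_empty_or_nonempty with rfl | hne
  · simpa only [biUnion_empty] using isArc_empty (2 * N + 1)
  · obtain ⟨x, hx, hmin⟩ := S.exists_min_image f hS hne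
    obtain ⟨z, hz, hmax⟩ := S.exists_max_image f hS hne
    have hzN := hf z hz
    simp only [halfArc, ← preimage_iUnion₂]
    rw [biUnion_Icc_add hx hz hmin hmax (by omega)]
    exact isArc_val_preimage_Icc (by omega)

theorem IsIntervalWrt.halfArc_inter_compl_biUnion_nonempty_iff {S : Set α}
    (hS : IsIntervalWrt (fun x y ↦ f x ≤ f y) S) {u : α} (hu : f u ≤ N) :
    (halfArc N (f u) ∩ (⋃ x ∈ S, halfArc N (f x))ᶜ).Nonempty ↔ u ∉ S := by
  rw [inter_compl_nonempty_iff, not_iff_not]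
  refine ⟨fun hcover ↦ ?_, subset_biUnion_of_mem (u := fun x ↦ halfArc N (f x))⟩
  -- An arc through the start point of `u` starts at or before it, one through the end point of `u`
  -- starts at or after it; so `u` lies between two elements of `S`.
  obtain ⟨x, hx, hxu⟩ := mem_iUnion₂.1 <| hcover <|
    (natCast_mem_halfArc_iff (by omega)).2 ⟨le_rfl, (f u).le_add_right N⟩
  obtain ⟨z, hz, huz⟩ := mem_iUnion₂.1 <| hcover <|
    (natCast_mem_halfArc_iff (by omega)).2 ⟨(f u).le_add_right N, le_rfl⟩
  rw [natCast_mem_halfArc_iff (by omega)] at hxu huz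
  exact hS x u z hxu.1 (Nat.le_of_add_le_add_right huz.2) hx hz

end HalfArcs

theorem exists_nat_numbering_of_isLinearOrder {α : Type*} [Finite α] (r : α → α → Prop)
    [IsLinearOrder α r] :
    ∃ f : α → ℕ, (∀ x, f x < Nat.card α) ∧ ∀ x y, r x y ↔ f x ≤ f y := by
  classical
  let : LinearOrder α :=
    { le := r
      le_refl := refl_of r
      le_trans := fun _ _ _ ↦ trans_of r
      le_antisymm := fun _ _ ↦ antisymm_of r
      le_total := total_of r
      toDecidableLE := Classical.decRel r }
  have := Fintype.ofFinite α
  let e := Fintype.orderIsoFinOfCardEq α Nat.card_eq_fintype_card.symm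
  exact ⟨fun x ↦ e.symm x, fun x ↦ (e.symm x).is_lt, fun x y ↦ e.symm.le_iff_le.symm⟩

theorem IsIntervalHypergraph.exists_isArcModel {V : Type*} {G : SimpleGraph V}
    {U : Set V} [Finite U] (hU : G.IsClique U) (hUc : G.IsClique Uᶜ)
    (hconv : IsIntervalHypergraph fun w : ↥Uᶜ ↦ {u : U | Gᶜ.Adj (u : V) (w : V)}) :
    ∃ n > 0, ∃ l, IsArcModel G n l := by
  obtain ⟨r, _, hr⟩ := hconv
  obtain ⟨f, hfN, hrf⟩ := exists_nat_numbering_of_isLinearOrder r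
  obtain rfl : r = fun x y ↦ f x ≤ f y := funext₂ fun x y ↦ propext (hrf x y)
  generalize Nat.card U = N at hfN
  refine ⟨2 * N + 1, Nat.succ_pos _, exists_isArcModel_of_isClique hU hUc
    (A := fun u ↦ halfArc N (f u))
    (B := fun w ↦ (⋃ u ∈ {u : U | Gᶜ.Adj (u : V) (w : V)}, halfArc N (f u))ᶜ)
    (p := (N : ℕ)) (q := (2 * N : ℕ)) (fun u ↦ isArc_halfArc (hfN u).le)
    (fun w ↦ (isArc_biUnion_halfArc (toFinite _) fun u _ ↦ (hfN u).le).compl)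
    (fun u ↦ ?_) (fun w hw ↦ ?_) fun u w ↦ ?_⟩
  · rw [natCast_mem_halfArc_iff (by omega)]
    exact ⟨(hfN u).le, N.le_add_left (f u)⟩
  · obtain ⟨u, -, hu⟩ := mem_iUnion₂.1 hw
    rw [natCast_mem_halfArc_iff le_rfl] at hu
    have := hfN u
    omega
  · have huw : (u : V) ≠ w := fun h ↦ w.2 (h ▸ u.2)
    rw [(hr w).halfArc_inter_compl_biUnion_nonempty_iff (hfN u).le, mem_ofPred_eq,
      G.compl_adj, not_and_not_right]
    exact (imp_iff_right huw).symm

/-- Every co-convex graph is a circular-arc graph: if the complement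
of `G` is a convex bipartite graph, then `G` is a circular-arc graph. -/
theorem stmt16 {V : Type*} [Fintype V] (G : SimpleGraph V)
    (h : ∃ U W : Set V, U ∪ W = Set.univ ∧ U ∩ W = ∅ ∧
      (∀ u ∈ U, ∀ v ∈ U, ¬ Gᶜ.Adj u v) ∧
      (∀ u ∈ W, ∀ v ∈ W, ¬ Gᶜ.Adj u v) ∧
      IsIntervalHypergraph (fun w : W => {u : U | Gᶜ.Adj (u : V) (w : V)})) :
    IsCAGraph G := by
  obtain ⟨U, W, hUW, hdisj, hU, hW, hconv⟩ := h
  obtain rfl : W = Uᶜ := eq_compl_iff_isCompl.2 <| IsCompl.symm <|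
    isCompl_iff.2 ⟨disjoint_iff_inter_eq_empty.2 hdisj, codisjoint_iff.2 hUW⟩
  obtain ⟨n, hn, l, hl⟩ := hconv.exists_isArcModel
    (SimpleGraph.isIndepSet_compl G |>.1 fun u hu v hv _ ↦ hU u hu v hv)
    (SimpleGraph.isIndepSet_compl G |>.1 fun u hu v hv _ ↦ hW u hu v hv)
  exact hl.isCAGraph hn
end
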